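/- arXiv:1409.7499 — 2 statements merged into one kernel-verified Lean document; each statement's English description precedes it below -/
import Mathlib

section
/- There exists a constant C > 0 such that for every t > 0 and every R ∈ (0,1], t ∫_0^{t/2} ∫_0^{R} exp(−2 r² (t−s)) r⁴ (1+s)^{−15/7} dr ds ≤ C t^{−3/2}. -/
/-!
On `0 ≤ s ≤ t / 2` the damping rate satisfies `2 (t - s) ≥ t`, so extending the inner integral to
`(0, ∞)` and evaluating it as a Gamma integral bounds it by a multiple of `t ^ (-5 / 2)`, uniformly
in `R` and `s`. The remaining weight `(1 + s) ^ (-15 / 7)` has total mass `7 / 8` on `(0, ∞)`.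
-/

open MeasureTheory Set

section GammaIntegral

variable {p q b R t s : ℝ}

theorem integral_rpow_mul_exp_neg_mul_rpow_le (hp : 0 < p) (hq : -1 < q) (hb : 0 < b)
    (hR : 0 ≤ R) :
    ∫ r in (0 : ℝ)..R, r ^ q * Real.exp (-b * r ^ p) ≤
      b ^ (-(q + 1) / p) * (1 / p) * Real.Gamma ((q + 1) / p) := by
  rw [intervalIntegral.integral_of_le hR, ← integral_rpow_mul_exp_neg_mul_rpow hp hq hb]
  refine setIntegral_mono_set (integrableOn_rpow_mul_exp_neg_mul_rpow hq hp hb) ?_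
    Ioc_subset_Ioi_self.eventuallyLE
  filter_upwards [ae_restrict_mem measurableSet_Ioi] with r (hr : 0 < r)
  simp only [Pi.zero_apply]
  positivity

theorem integral_exp_mul_rpow_le_of_le_half (hp : 0 < p) (hq : -1 < q) (ht : 0 < t)
    (hs : s ≤ t / 2) (hR : 0 ≤ R) :
    ∫ r in (0 : ℝ)..R, Real.exp (-2 * r ^ p * (t - s)) * r ^ q ≤
      t ^ (-(q + 1) / p) * (1 / p) * Real.Gamma ((q + 1) / p) := by
  have hqp : 0 < (q + 1) / p := div_pos (by linarith) hp
  have rate_ge : t ≤ 2 * (t - s) := by linarith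
  calc
    ∫ r in (0 : ℝ)..R, Real.exp (-2 * r ^ p * (t - s)) * r ^ q
    _ = ∫ r in (0 : ℝ)..R, r ^ q * Real.exp (-(2 * (t - s)) * r ^ p) := by
      congr! 2 with r
      ring_nf
    _ ≤ (2 * (t - s)) ^ (-(q + 1) / p) * (1 / p) * Real.Gamma ((q + 1) / p) :=
      integral_rpow_mul_exp_neg_mul_rpow_le hp hq (ht.trans_le rate_ge) hR
    _ ≤ t ^ (-(q + 1) / p) * (1 / p) * Real.Gamma ((q + 1) / p) := by
      gcongr ?_ * _ * _
      exact Real.rpow_le_rpow_of_nonpos ht rate_ge (by rw [neg_div]; exact neg_nonpos.2 hqp.le)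

theorem integral_integral_exp_mul_rpow_mul_le {g : ℝ → ℝ} (hp : 0 < p) (hq : -1 < q)
    (ht : 0 < t) (hR : 0 ≤ R) (g_nonneg : ∀ s ∈ Ioc 0 (t / 2), 0 ≤ g s)
    (g_int : IntervalIntegrable g volume 0 (t / 2)) :
    ∫ s in (0 : ℝ)..(t / 2), ∫ r in (0 : ℝ)..R, Real.exp (-2 * r ^ p * (t - s)) * r ^ q * g s ≤
      t ^ (-(q + 1) / p) * (1 / p) * Real.Gamma ((q + 1) / p) * ∫ s in (0 : ℝ)..(t / 2), g s := by
  have ht2 : 0 ≤ t / 2 := by positivity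
  simp only [intervalIntegral.integral_mul_const]
  rw [← intervalIntegral.integral_const_mul, intervalIntegral.integral_of_le ht2,
    intervalIntegral.integral_of_le ht2]
  refine integral_mono_of_nonneg ?_ (g_int.const_mul _).1 ?_ <;>
    filter_upwards [ae_restrict_mem measurableSet_Ioc] with s hs
  · refine mul_nonneg (intervalIntegral.integral_nonneg hR fun r hr ↦ ?_) (g_nonneg s hs)
    have := hr.1
    positivity
  · exact mul_le_mul_of_nonneg_right
      (integral_exp_mul_rpow_le_of_le_half hp hq ht hs.2 hR) (g_nonneg s hs)

end GammaIntegral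

section PolynomialWeight

variable {a T : ℝ}

theorem intervalIntegrable_one_add_rpow (hT : 0 ≤ T) :
    IntervalIntegrable (fun s : ℝ ↦ (1 + s) ^ a) volume 0 T := by
  refine ContinuousOn.intervalIntegrable (ContinuousOn.rpow_const (by fun_prop) fun s hs ↦ ?_)
  rw [uIcc_of_le hT] at hs
  exact Or.inl (by linarith [hs.1])

theorem integral_one_add_rpow_neg_le (ha : 1 < a) (hT : 0 ≤ T) :
    ∫ s in (0 : ℝ)..T, (1 + s) ^ (-a) ≤ 1 / (a - 1) := by
  have zero_notMem : (0 : ℝ) ∉ uIcc (1 + 0) (1 + T) := by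
    rw [uIcc_of_le (by linarith)]
    exact fun h ↦ by linarith [h.1]
  calc
    ∫ s in (0 : ℝ)..T, (1 + s) ^ (-a)
    _ = (1 - (1 + T) ^ (1 - a)) / (a - 1) := by
      rw [intervalIntegral.integral_comp_add_left (fun x : ℝ ↦ x ^ (-a)) 1,
        integral_rpow (Or.inr ⟨by linarith, zero_notMem⟩), add_zero, Real.one_rpow,
        neg_add_eq_sub, ← neg_sub a 1, div_neg, ← neg_div, neg_sub]
    _ ≤ 1 / (a - 1) :=
      div_le_div_of_nonneg_right (sub_le_self _ (by positivity)) (by linarith)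

end PolynomialWeight

theorem stmt13_general {p q a t R : ℝ} (hp : 0 < p) (hq : -1 < q) (ha : 1 < a) (ht : 0 < t)
    (hR : 0 ≤ R) :
    t * (∫ s in (0 : ℝ)..(t / 2), ∫ r in (0 : ℝ)..R,
        Real.exp (-2 * r ^ p * (t - s)) * r ^ q * (1 + s) ^ (-a)) ≤
      Real.Gamma ((q + 1) / p) / (p * (a - 1)) * t ^ (1 - (q + 1) / p) := by
  have hqp : 0 < (q + 1) / p := div_pos (by linarith) hp
  have ht2 : 0 ≤ t / 2 := by positivity
  calc
    _ ≤ t * (t ^ (-(q + 1) / p) * (1 / p) * Real.Gamma ((q + 1) / p) *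
          ∫ s in (0 : ℝ)..(t / 2), (1 + s) ^ (-a)) := by
      gcongr
      exact integral_integral_exp_mul_rpow_mul_le hp hq ht hR
        (fun s hs ↦ Real.rpow_nonneg (by linarith [hs.1]) _) (intervalIntegrable_one_add_rpow ht2)
    _ ≤ t * (t ^ (-(q + 1) / p) * (1 / p) * Real.Gamma ((q + 1) / p) * (1 / (a - 1))) := by
      gcongr
      exact integral_one_add_rpow_neg_le ha ht2
    _ = Real.Gamma ((q + 1) / p) / (p * (a - 1)) * t ^ (1 - (q + 1) / p) := by
      rw [sub_eq_add_neg 1, Real.rpow_add ht, Real.rpow_one, neg_div, div_mul_eq_div_div]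
      ring

/-- There is a constant `C > 0` such that for every `t > 0` and every
`R ∈ (0,1]`,
`t ∫_0^{t/2} ∫_0^R exp(-2r²(t-s)) r⁴ (1+s)^{-15/7} dr ds ≤ C t^{-3/2}`. -/
theorem stmt13 :
    ∃ C : ℝ, 0 < C ∧ ∀ t : ℝ, 0 < t → ∀ R : ℝ, 0 < R → R ≤ 1 →
      t * (∫ s in (0 : ℝ)..(t / 2), ∫ r in (0 : ℝ)..R,
          Real.exp (-2 * r ^ 2 * (t - s)) * r ^ 4 * (1 + s) ^ (-(15 : ℝ) / 7)) ≤
        C * t ^ (-(3 : ℝ) / 2) := by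
  refine ⟨Real.Gamma (5 / 2) / (16 / 7), by positivity, fun t ht R hR _ ↦ ?_⟩
  convert stmt13_general two_pos (by norm_num : (-1 : ℝ) < 4) (by norm_num : (1 : ℝ) < 15 / 7)
    ht hR.le using 1 <;> norm_num
end

section
/- Let a ≤ 0, c > 0 and b ∈ ℝ. Let Q : ℝ³ → ℝ^{3×3} be continuously differentiable such that the functions |∇Q|², |Q|², |Q|³ and |Q|⁴ are Lebesgue integrable on ℝ³, and suppose that both integral identities ∫_{ℝ³} ( (1/2)|∇Q|² + (3a/2)|Q|² + b tr(Q³) + (3c/4)|Q|⁴ ) dx = 0 and ∫_{ℝ³} ( |∇Q|² + a|Q|² + b tr(Q³) + c|Q|⁴ ) dx = 0 hold. Then Q(x) = 0 for every x ∈ ℝ³. -/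
open MeasureTheory Matrix

noncomputable section

abbrev E3 : Type := EuclideanSpace ℝ (Fin 3)
abbrev Mat : Type := Matrix (Fin 3) (Fin 3) ℝ

attribute [local instance] Matrix.normedAddCommGroup Matrix.normedSpace

/-- Frobenius inner product `A : B`. -/
def frob (A B : Mat) : ℝ := ∑ i, ∑ j, A i j * B i j
/-- Frobenius norm `|A|`. -/
def frobNorm (A : Mat) : ℝ := Real.sqrt (frob A A)
/-- partial derivative `∂ₖ f` of a scalar function on `ℝ³` -/
def pd (k : Fin 3) (f : E3 → ℝ) (x : E3) : ℝ := fderiv ℝ f x (EuclideanSpace.single k 1)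
/-- `|∇Q(x)|² = Σ_{k,i,j} (∂ₖ Q_{ij}(x))²` -/
def gradNormSq (Q : E3 → Mat) (x : E3) : ℝ := ∑ k, ∑ i, ∑ j, (pd k (fun y => Q y i j) x) ^ 2

/-!
With `F(Q) = (a/2)|Q|² + (b/3) tr(Q³) + (c/4)|Q|⁴`, the Pochožaev identity in dimension `d` reads
`∫ ((d - 2)/2 |∇Q|² + d F(Q)) = 0`. Subtracting it from `d/3` times the variational identity
eliminates the cubic term, the only one without a sign, and leaves
`∫ ((1 - d/6) |∇Q|² - (d a/6) |Q|² + (d c/12) |Q|⁴) = 0`.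
For `0 < d ≤ 6` and `a ≤ 0 < c` every summand is nonnegative, so `|Q|⁴` vanishes almost everywhere,
hence everywhere by continuity.
-/

theorem pow_le_pow_add_pow {t : ℝ} (ht : 0 ≤ t) {p k q : ℕ} (hpk : p ≤ k) (hkq : k ≤ q) :
    t ^ k ≤ t ^ p + t ^ q := by
  rcases le_total t 1 with ht1 | ht1
  · exact (pow_le_pow_of_le_one ht ht1 hpk).trans (le_add_of_nonneg_right (by positivity))
  · exact (pow_le_pow_right₀ ht1 hkq).trans (le_add_of_nonneg_left (by positivity))

theorem integrable_pow_of_le_of_le {X : Type*} [MeasurableSpace X] {μ : Measure X} {u : X → ℝ}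
    (hu : AEStronglyMeasurable u μ) (hu0 : 0 ≤ u) {p k q : ℕ} (hpk : p ≤ k) (hkq : k ≤ q)
    (hp : Integrable (fun x => u x ^ p) μ) (hq : Integrable (fun x => u x ^ q) μ) :
    Integrable (fun x => u x ^ k) μ := by
  refine (hp.add hq).mono' (hu.pow k) (.of_forall fun x => ?_)
  rw [Real.norm_of_nonneg (pow_nonneg (hu0 x) k)]
  exact pow_le_pow_add_pow (hu0 x) hpk hkq

section IntegralIdentities

variable {X E : Type*} [MeasurableSpace X] [NormedAddCommGroup E] {μ : Measure X}
  {d a b c : ℝ} {g t : X → ℝ} {f : X → E}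

theorem integral_eq_zero_of_pochozaev_of_variational
    (hg : Integrable g μ) (ht : Integrable t μ)
    (hf2 : Integrable (fun x => ‖f x‖ ^ 2) μ) (hf4 : Integrable (fun x => ‖f x‖ ^ 4) μ)
    (hpoch : ∫ x, ((d - 2) / 2 * g x
      + d * (a / 2 * ‖f x‖ ^ 2 + b / 3 * t x + c / 4 * ‖f x‖ ^ 4)) ∂μ = 0)
    (hvar : ∫ x, (g x + a * ‖f x‖ ^ 2 + b * t x + c * ‖f x‖ ^ 4) ∂μ = 0) :
    ∫ x, ((1 - d / 6) * g x - d * a / 6 * ‖f x‖ ^ 2 + d * c / 12 * ‖f x‖ ^ 4) ∂μ = 0 := by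
  have hpoch_int : Integrable (fun x => (d - 2) / 2 * g x
      + d * (a / 2 * ‖f x‖ ^ 2 + b / 3 * t x + c / 4 * ‖f x‖ ^ 4)) μ := by
    fun_prop
  have hvar_int : Integrable (fun x => g x + a * ‖f x‖ ^ 2 + b * t x + c * ‖f x‖ ^ 4) μ := by
    fun_prop
  calc ∫ x, ((1 - d / 6) * g x - d * a / 6 * ‖f x‖ ^ 2 + d * c / 12 * ‖f x‖ ^ 4) ∂μ
    _ = ∫ x, (d / 3 * (g x + a * ‖f x‖ ^ 2 + b * t x + c * ‖f x‖ ^ 4)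
          - ((d - 2) / 2 * g x
            + d * (a / 2 * ‖f x‖ ^ 2 + b / 3 * t x + c / 4 * ‖f x‖ ^ 4))) ∂μ := by
        congr 1 with x
        ring
    _ = 0 := by
        rw [integral_sub (hvar_int.const_mul _) hpoch_int, integral_const_mul, hvar, hpoch]
        ring

theorem ae_eq_zero_of_pochozaev_of_variational
    (hd : 0 < d) (hd6 : d ≤ 6) (ha : a ≤ 0) (hc : 0 < c) (hg0 : 0 ≤ g)
    (hg : Integrable g μ) (ht : Integrable t μ)
    (hf2 : Integrable (fun x => ‖f x‖ ^ 2) μ) (hf4 : Integrable (fun x => ‖f x‖ ^ 4) μ)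
    (hpoch : ∫ x, ((d - 2) / 2 * g x
      + d * (a / 2 * ‖f x‖ ^ 2 + b / 3 * t x + c / 4 * ‖f x‖ ^ 4)) ∂μ = 0)
    (hvar : ∫ x, (g x + a * ‖f x‖ ^ 2 + b * t x + c * ‖f x‖ ^ 4) ∂μ = 0) :
    f =ᵐ[μ] 0 := by
  have hquartic (x : X) : 0 ≤ d * c / 12 * ‖f x‖ ^ 4 := by positivity
  have hrest (x : X) : 0 ≤ (1 - d / 6) * g x - d * a / 6 * ‖f x‖ ^ 2 := by
    have hgrad : 0 ≤ (1 - d / 6) * g x := mul_nonneg (by linarith) (hg0 x)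
    have hquad : d * a / 6 * ‖f x‖ ^ 2 ≤ 0 :=
      mul_nonpos_of_nonpos_of_nonneg (by nlinarith) (by positivity)
    linarith
  have hsum := integral_eq_zero_of_pochozaev_of_variational hg ht hf2 hf4 hpoch hvar
  have hsum_int : Integrable
      (fun x => (1 - d / 6) * g x - d * a / 6 * ‖f x‖ ^ 2 + d * c / 12 * ‖f x‖ ^ 4) μ := by
    fun_prop
  rw [integral_eq_zero_iff_of_nonneg (fun x => add_nonneg (hrest x) (hquartic x)) hsum_int] at hsum
  filter_upwards [hsum] with x hx
  have hx4 : d * c / 12 * ‖f x‖ ^ 4 = 0 :=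
    ((add_eq_zero_iff_of_nonneg (hrest x) (hquartic x)).mp hx).2
  have hcoeff : d * c / 12 ≠ 0 := by positivity
  simpa [hcoeff] using hx4

end IntegralIdentities

section Frobenius

-- In this section the Frobenius norm takes precedence over the sup norm activated above.
open scoped Matrix.Norms.Frobenius

variable {m n 𝕜 : Type*} [Fintype m] [Fintype n] [RCLike 𝕜]

theorem frobenius_norm_eq_sqrt_sum {α : Type*} [SeminormedAddCommGroup α] (A : Matrix m n α) :
    ‖A‖ = √(∑ i, ∑ j, ‖A i j‖ ^ 2) := by
  simp only [frobenius_norm_def, Real.sqrt_eq_rpow, Real.rpow_two]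

theorem norm_trace_mul_le (A : Matrix m n 𝕜) (B : Matrix n m 𝕜) :
    ‖trace (A * B)‖ ≤ ‖A‖ * ‖B‖ := by
  calc ‖trace (A * B)‖
    _ = ‖∑ p : m × n, A p.1 p.2 * Bᵀ p.1 p.2‖ := by
        simp only [trace, diag_apply, mul_apply, transpose_apply, Fintype.sum_prod_type]
    _ ≤ ∑ p : m × n, ‖A p.1 p.2‖ * ‖Bᵀ p.1 p.2‖ := by
        simpa only [norm_mul] using
          norm_sum_le Finset.univ fun p : m × n => A p.1 p.2 * Bᵀ p.1 p.2
    _ ≤ √(∑ p : m × n, ‖A p.1 p.2‖ ^ 2) * √(∑ p : m × n, ‖Bᵀ p.1 p.2‖ ^ 2) :=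
        Real.sum_mul_le_sqrt_mul_sqrt _ _ _
    _ = ‖A‖ * ‖Bᵀ‖ := by
        simp only [frobenius_norm_eq_sqrt_sum, Fintype.sum_prod_type]
    _ = ‖A‖ * ‖B‖ := by rw [frobenius_norm_transpose]

theorem norm_trace_pow_le [DecidableEq n] (A : Matrix n n 𝕜) {k : ℕ} (hk : 2 ≤ k) :
    ‖trace (A ^ k)‖ ≤ ‖A‖ ^ k := by
  obtain ⟨l, rfl⟩ := Nat.exists_eq_add_of_le' hk
  calc ‖trace (A ^ (l + 2))‖
    _ = ‖trace (A * A ^ (l + 1))‖ := by rw [← pow_succ']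
    _ ≤ ‖A‖ * ‖A ^ (l + 1)‖ := norm_trace_mul_le _ _
    _ ≤ ‖A‖ * ‖A‖ ^ (l + 1) := by gcongr; exact norm_pow_le' A l.succ_pos
    _ = ‖A‖ ^ (l + 2) := (pow_succ' _ _).symm

theorem integrable_trace_pow [DecidableEq n] {X : Type*} [TopologicalSpace X] [MeasurableSpace X]
    [OpensMeasurableSpace X] {μ : Measure X} {Q : X → Matrix n n 𝕜} (hQ : Continuous Q)
    {k : ℕ} (hk : 2 ≤ k) (hint : Integrable (fun x => ‖Q x‖ ^ k) μ) :
    Integrable (fun x => trace (Q x ^ k)) μ :=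
  hint.mono' (hQ.pow k).matrix_trace.aestronglyMeasurable
    (.of_forall fun x => norm_trace_pow_le (Q x) hk)

/-- The squared norm `|∇Q(x)|²` of the gradient of a matrix field on `ℝᵈ`: the counterpart of
`gradNormSq` in any dimension and for matrices of any size. -/
def gradFrobeniusNormSq {d : ℕ} (Q : EuclideanSpace ℝ (Fin d) → Matrix m n ℝ)
    (x : EuclideanSpace ℝ (Fin d)) : ℝ :=
  ∑ k, ∑ i, ∑ j, fderiv ℝ (fun y => Q y i j) x (EuclideanSpace.single k 1) ^ 2

theorem gradFrobeniusNormSq_nonneg {d : ℕ} (Q : EuclideanSpace ℝ (Fin d) → Matrix m n ℝ) :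
    0 ≤ gradFrobeniusNormSq Q := fun _ =>
  Finset.sum_nonneg fun _ _ => Finset.sum_nonneg fun _ _ => Finset.sum_nonneg fun _ _ => sq_nonneg _

theorem stmt19_general [DecidableEq n] {d : ℕ} (hd : 0 < d) (hd6 : d ≤ 6)
    {a b c : ℝ} (ha : a ≤ 0) (hc : 0 < c)
    {Q : EuclideanSpace ℝ (Fin d) → Matrix n n ℝ} (hQ : Differentiable ℝ Q)
    (hgrad : Integrable (gradFrobeniusNormSq Q))
    (hQ2 : Integrable (fun x => ‖Q x‖ ^ 2)) (hQ4 : Integrable (fun x => ‖Q x‖ ^ 4))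
    (hpoch : ∫ x, (((d : ℝ) - 2) / 2 * gradFrobeniusNormSq Q x
      + d * (a / 2 * ‖Q x‖ ^ 2 + b / 3 * trace (Q x ^ 3) + c / 4 * ‖Q x‖ ^ 4)) = 0)
    (hvar : ∫ x, (gradFrobeniusNormSq Q x + a * ‖Q x‖ ^ 2 + b * trace (Q x ^ 3)
      + c * ‖Q x‖ ^ 4) = 0) :
    Q = 0 := by
  have hQ3 : Integrable (fun x => ‖Q x‖ ^ 3) :=
    integrable_pow_of_le_of_le hQ.continuous.norm.aestronglyMeasurable
      (fun x => norm_nonneg (Q x)) (by norm_num) (by norm_num) hQ2 hQ4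
  have htrace : Integrable (fun x => trace (Q x ^ 3)) :=
    integrable_trace_pow hQ.continuous (by norm_num) hQ3
  have hQ_ae : Q =ᵐ[volume] 0 :=
    ae_eq_zero_of_pochozaev_of_variational (mod_cast hd) (mod_cast hd6) ha hc
      (gradFrobeniusNormSq_nonneg Q) hgrad htrace hQ2 hQ4 hpoch hvar
  exact (hQ.continuous.ae_eq_iff_eq volume continuous_zero).mp hQ_ae

theorem frobNorm_eq_norm (A : Mat) : frobNorm A = ‖A‖ := by
  simp only [frobNorm, frob, frobenius_norm_eq_sqrt_sum, Real.norm_eq_abs, sq_abs, ← pow_two]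

theorem gradNormSq_eq_gradFrobeniusNormSq (Q : E3 → Mat) :
    gradNormSq Q = gradFrobeniusNormSq Q :=
  rfl

end Frobenius

/-- Let `a ≤ 0 < c`, `b ∈ ℝ`. If `Q : ℝ³ → ℝ^{3×3}` is `C¹` with
`|∇Q|², |Q|², |Q|³, |Q|⁴` integrable, and both
`∫ ( (1/2)|∇Q|² + (3a/2)|Q|² + b tr(Q³) + (3c/4)|Q|⁴ ) = 0` (Pochožaev identity) and
`∫ ( |∇Q|² + a|Q|² + b tr(Q³) + c|Q|⁴ ) = 0` (variational identity) hold, then `Q ≡ 0`. -/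
theorem stmt19 (a b c : ℝ) (ha : a ≤ 0) (hc : 0 < c)
    (Q : E3 → Mat) (hQ : ContDiff ℝ 1 Q)
    (hint1 : Integrable (fun x => gradNormSq Q x))
    (hint2 : Integrable (fun x => frobNorm (Q x) ^ 2))
    (hint3 : Integrable (fun x => frobNorm (Q x) ^ 3))
    (hint4 : Integrable (fun x => frobNorm (Q x) ^ 4))
    (hpoho : ∫ x : E3, ((1 : ℝ) / 2 * gradNormSq Q x + 3 * a / 2 * frobNorm (Q x) ^ 2
        + b * Matrix.trace (Q x ^ 3) + 3 * c / 4 * frobNorm (Q x) ^ 4) = 0)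
    (hvar : ∫ x : E3, (gradNormSq Q x + a * frobNorm (Q x) ^ 2
        + b * Matrix.trace (Q x ^ 3) + c * frobNorm (Q x) ^ 4) = 0) :
    ∀ x : E3, Q x = 0 := by
  simp only [frobNorm_eq_norm, gradNormSq_eq_gradFrobeniusNormSq] at hint1 hint2 hint4 hpoho hvar
  exact congrFun (stmt19_general (d := 3) (by norm_num) (by norm_num) ha hc
    (hQ.differentiable one_ne_zero) hint1 hint2 hint4 (by convert hpoho using 3; ring) hvar)
end
end
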